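/- arXiv:2109.08397 — 2 statements merged into one kernel-verified Lean document; each statement's English description precedes it below -/
import Mathlib

section
/- (Strong law of large numbers for the RWI.) Almost surely, S_n/n converges to μ as n → ∞. -/
open MeasureTheory ProbabilityTheory Real Filter Set
open scoped BigOperators NNReal

noncomputable section

namespace RWI

abbrev E : Type := EuclideanSpace ℝ (Fin 3)

def vec (x y z : ℝ) : E := (EuclideanSpace.equiv (Fin 3) ℝ).symm ![x, y, z]

/-- The two families of vertices of the `1h` ice lattice. -/
def V (a h : ℝ) (i : Fin 2) : Set E :=
  {v | ∃ k l n : ℤ, v = vec (a * ((i : ℕ) + (3 / 2) * k))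
      (a * ((Real.sqrt 3 / 2) * k + Real.sqrt 3 * l)) (h * n)}

/-- Horizontal jump from a vertex of type `i` in direction `j`. -/
def w (a : ℝ) (i : Fin 2) (j : Fin 3) : E :=
  vec (a * Real.cos (2 * (j : ℕ) * π / 3 + (i : ℕ) * π))
      (a * Real.sin (2 * (j : ℕ) * π / 3 + (i : ℕ) * π)) 0

/-- `S` is a random walk on ice with parameters `a, h, p, α, q` and natural filtration `F`. -/
structure IsRWI {Ω : Type} [MeasurableSpace Ω] (P : Measure Ω)
    (a h p α : ℝ) (q : Fin 2 → Fin 3 → ℝ)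
    (S : ℕ → Ω → E) (F : ℕ → MeasurableSpace Ω) : Prop where
  prob : IsProbabilityMeasure P
  ha : 0 < a
  hh : 0 < h
  hp0 : 0 ≤ p
  hp1 : p ≤ 1
  hα0 : 0 < α
  hα1 : α < 1
  hq : ∀ i j, 0 ≤ q i j
  hqsum : ∀ i, q i 0 + q i 1 + q i 2 = 1 - p
  hS0 : ∀ ω, S 0 ω = 0
  hSmeas : ∀ n, Measurable (S n)
  hF : ∀ n, F n =
    MeasurableSpace.comap (fun ω (k : Fin n) => S ((k : ℕ) + 1) ω - S (k : ℕ) ω)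
      MeasurableSpace.pi
  hTrans : ∀ (n : ℕ) (f : E → ℝ), Measurable f → (∃ C, ∀ x, |f x| ≤ C) →
    P[fun ω => f (S (n + 1) ω)|F n] =ᵐ[P]
      fun ω => ∑ i : Fin 2, (V a h i).indicator (fun _ => (1 : ℝ)) (S n ω) *
        (α * p * f (S n ω + vec 0 0 h) + (1 - α) * p * f (S n ω + vec 0 0 (-h)) +
          ∑ j : Fin 3, q i j * f (S n ω + w a i j))

def uu (q : Fin 2 → Fin 3 → ℝ) (i : Fin 2) : ℝ := q i 1 + q i 2

def vv (q : Fin 2 → Fin 3 → ℝ) (i : Fin 2) : ℝ := q i 1 - q i 2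

/-- The drift vector `μ` of the RWI. -/
def muI (a h p α : ℝ) (q : Fin 2 → Fin 3 → ℝ) : E :=
  vec (3 * a / 4 * (-(uu q 0) + uu q 1)) (a * Real.sqrt 3 / 4 * (vv q 0 - vv q 1))
    (h * p * (2 * α - 1))

/-- The vector `θ` of the RWI. -/
def thetaI (a p : ℝ) (q : Fin 2 → Fin 3 → ℝ) : E :=
  vec (a * ((1 - p) - 3 / 4 * (uu q 0 + uu q 1))) (a * Real.sqrt 3 / 4 * (vv q 0 + vv q 1)) 0

/-- The sign process `ε_n = 1_{S_n ∈ V_0} - 1_{S_n ∈ V_1}`. -/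
def epsI {Ω : Type} (a h : ℝ) (S : ℕ → Ω → E) (n : ℕ) (ω : Ω) : ℝ :=
  (V a h 0).indicator (fun _ => (1 : ℝ)) (S n ω) - (V a h 1).indicator (fun _ => (1 : ℝ)) (S n ω)

end RWI

namespace RWI

/-- The five jumps available from a vertex of type `i`: two vertical, then three horizontal. -/
def jump (a h : ℝ) (i : Fin 2) : Fin 5 → E :=
  ![vec 0 0 h, vec 0 0 (-h), w a i 0, w a i 1, w a i 2]

/-- The probabilities of the five jumps. -/
def weight (p α : ℝ) (q : Fin 2 → Fin 3 → ℝ) (i : Fin 2) : Fin 5 → ℝ :=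
  ![α * p, (1 - α) * p, q i 0, q i 1, q i 2]

/-- The effect of the five jumps on the type of the vertex: `-1` if the type changes. -/
def flip : Fin 5 → ℝ := ![1, 1, -1, -1, -1]

/-- The sign attached to a vertex type. -/
def typeSign : Fin 2 → ℝ := ![1, -1]

/-- The sign of a point: `1` on `V₀`, `-1` on `V₁`. -/
def sign (a h : ℝ) (x : E) : ℝ :=
  (V a h 0).indicator (fun _ => (1 : ℝ)) x - (V a h 1).indicator (fun _ => (1 : ℝ)) x

/-- The transition operator of the walk. -/
def transition (a h p α : ℝ) (q : Fin 2 → Fin 3 → ℝ) (f : E → ℝ) (x : E) : ℝ :=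
  ∑ i : Fin 2, (V a h i).indicator (fun _ => (1 : ℝ)) x *
    (α * p * f (x + vec 0 0 h) + (1 - α) * p * f (x + vec 0 0 (-h)) +
      ∑ j : Fin 3, q i j * f (x + w a i j))

@[simp] lemma vec_zero (x y z : ℝ) : vec x y z 0 = x := rfl
@[simp] lemma vec_one (x y z : ℝ) : vec x y z 1 = y := rfl
@[simp] lemma vec_two (x y z : ℝ) : vec x y z 2 = z := rfl

lemma vec_add (x y z x' y' z' : ℝ) :
    vec x y z + vec x' y' z' = vec (x + x') (y + y') (z + z') := by
  ext i; fin_cases i <;> simp [vec]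

lemma cos_two_pi_div_three : Real.cos (2 * π / 3) = -(1 / 2) := by
  rw [show 2 * π / 3 = π - π / 3 by ring, Real.cos_pi_sub, Real.cos_pi_div_three]

lemma sin_two_pi_div_three : Real.sin (2 * π / 3) = √3 / 2 := by
  rw [show 2 * π / 3 = π - π / 3 by ring, Real.sin_pi_sub, Real.sin_pi_div_three]

lemma cos_four_pi_div_three : Real.cos (2 * 2 * π / 3) = -(1 / 2) := by
  rw [show 2 * 2 * π / 3 = π / 3 + π by ring, Real.cos_add_pi, Real.cos_pi_div_three]

lemma sin_four_pi_div_three : Real.sin (2 * 2 * π / 3) = -(√3 / 2) := by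
  rw [show 2 * 2 * π / 3 = π / 3 + π by ring, Real.sin_add_pi, Real.sin_pi_div_three]

lemma w_eq (a : ℝ) (i : Fin 2) : w a i =
    ![vec (typeSign i * a) 0 0, vec (typeSign i * (-(a / 2))) (typeSign i * (a * √3 / 2)) 0,
      vec (typeSign i * (-(a / 2))) (typeSign i * (-(a * √3 / 2))) 0] := by
  ext j l
  fin_cases i <;> fin_cases j <;> fin_cases l <;>
    simp [w, typeSign, Real.cos_add_pi, Real.sin_add_pi, cos_two_pi_div_three,
      sin_two_pi_div_three, cos_four_pi_div_three, sin_four_pi_div_three] <;> ring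

lemma sum_weight {p α : ℝ} {q : Fin 2 → Fin 3 → ℝ} (hq : ∀ i, q i 0 + q i 1 + q i 2 = 1 - p)
    (i : Fin 2) : ∑ k, weight p α q i k = 1 := by
  simp [weight, Fin.sum_univ_five]
  linarith [hq i]

lemma weight_nonneg {p α : ℝ} {q : Fin 2 → Fin 3 → ℝ} (hp : 0 ≤ p) (hα0 : 0 ≤ α) (hα1 : α ≤ 1)
    (hq : ∀ i j, 0 ≤ q i j) (i : Fin 2) (k : Fin 5) : 0 ≤ weight p α q i k := by
  have := mul_nonneg hα0 hp
  have := mul_nonneg (sub_nonneg.2 hα1) hp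
  fin_cases k <;> simp [weight, *]

/-- The mean jump from a vertex of type `i` is `μ ± θ`. -/
lemma sum_weight_mul_jump {a h p α : ℝ} {q : Fin 2 → Fin 3 → ℝ}
    (hq : ∀ i, q i 0 + q i 1 + q i 2 = 1 - p) (i : Fin 2) (l : Fin 3) :
    ∑ k, weight p α q i k * jump a h i k l
      = muI a h p α q l + typeSign i * thetaI a p q l := by
  have h0 := hq 0
  have h1 := hq 1
  have e0 : q 0 0 = 1 - p - q 0 1 - q 0 2 := by linarith
  have e1 : q 1 0 = 1 - p - q 1 1 - q 1 2 := by linarith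
  fin_cases i <;> fin_cases l <;>
    simp [weight, jump, w_eq, Fin.sum_univ_five, typeSign, muI, thetaI, uu, vv, e0, e1] <;> ring

lemma sum_weight_mul_flip {p α : ℝ} {q : Fin 2 → Fin 3 → ℝ}
    (hq : ∀ i, q i 0 + q i 1 + q i 2 = 1 - p) (i : Fin 2) :
    ∑ k, weight p α q i k * flip k = 2 * p - 1 := by
  simp [weight, flip, Fin.sum_univ_five]
  linarith [hq i]

lemma disjoint_V {a h : ℝ} (ha : 0 < a) {x : E} (h0 : x ∈ V a h 0) (h1 : x ∈ V a h 1) : False := by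
  obtain ⟨k, l, n, rfl⟩ := h0
  obtain ⟨k', l', n', e⟩ := h1
  have e := congrArg (fun v : E => v 0) e
  simp only [vec_zero] at e
  have e := mul_left_cancel₀ ha.ne' e
  simp at e
  have : (3 * k : ℤ) = 2 + 3 * k' := by
    have : (3 * k : ℝ) = 2 + 3 * k' := by linarith
    exact_mod_cast this
  omega

lemma sign_of_mem {a h : ℝ} (ha : 0 < a) {x : E} {i : Fin 2} (hx : x ∈ V a h i) :
    sign a h x = typeSign i := by
  have hd := disjoint_V (h := h) (x := x) ha
  fin_cases i
  · have : x ∉ V a h 1 := fun h1 => hd hx h1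
    have hx : x ∈ V a h 0 := hx
    simp [sign, hx, this, typeSign]
  · have : x ∉ V a h 0 := fun h1 => hd h1 hx
    have hx : x ∈ V a h 1 := hx
    simp [sign, hx, this, typeSign]

/-- A jump from a vertex leads to a vertex, of the type prescribed by `flip`. -/
lemma exists_add_jump_mem {a h : ℝ} {x : E} {i : Fin 2} (hx : x ∈ V a h i) (k : Fin 5) :
    ∃ i', x + jump a h i k ∈ V a h i' ∧ typeSign i' = flip k * typeSign i := by
  obtain ⟨k₀, l₀, n₀, rfl⟩ := hx
  refine ⟨![i, i, 1 - i, 1 - i, 1 - i] k, ?_, ?_⟩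
  · fin_cases k
    · exact ⟨k₀, l₀, n₀ + 1, by simp [jump, vec_add]; congr 1; ring⟩
    · exact ⟨k₀, l₀, n₀ - 1, by simp [jump, vec_add]; congr 1; ring⟩
    · fin_cases i
      · exact ⟨k₀, l₀, n₀, by simp [jump, w_eq, typeSign, vec_add]; congr 1; ring⟩
      · exact ⟨k₀, l₀, n₀, by simp [jump, w_eq, typeSign, vec_add]; congr 1; ring⟩
    · fin_cases i
      · exact ⟨k₀ - 1, l₀ + 1, n₀, by simp [jump, w_eq, typeSign, vec_add]; congr 1 <;> ring⟩
      · exact ⟨k₀ + 1, l₀ - 1, n₀, by simp [jump, w_eq, typeSign, vec_add]; congr 1 <;> ring⟩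
    · fin_cases i
      · exact ⟨k₀ - 1, l₀, n₀, by simp [jump, w_eq, typeSign, vec_add]; congr 1 <;> ring⟩
      · exact ⟨k₀ + 1, l₀, n₀, by simp [jump, w_eq, typeSign, vec_add]; congr 1 <;> ring⟩
  · fin_cases i <;> fin_cases k <;> simp [typeSign, flip]

lemma zero_mem_V (a h : ℝ) : (0 : E) ∈ V a h 0 :=
  ⟨0, 0, 0, by ext i; fin_cases i <;> simp⟩

lemma countable_V (a h : ℝ) (i : Fin 2) : (V a h i).Countable := by
  refine (countable_range fun t : ℤ × ℤ × ℤ => vec (a * ((i : ℕ) + (3 / 2) * t.1))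
      (a * ((Real.sqrt 3 / 2) * t.1 + Real.sqrt 3 * t.2.1)) (h * t.2.2)).mono ?_
  rintro _ ⟨k, l, n, rfl⟩
  exact ⟨(k, l, n), rfl⟩

lemma measurable_sign (a h : ℝ) : Measurable (sign a h) :=
  (measurable_const.indicator (countable_V a h 0).measurableSet).sub
    (measurable_const.indicator (countable_V a h 1).measurableSet)

lemma abs_sign_le (a h : ℝ) (x : E) : |sign a h x| ≤ 1 := by
  by_cases h0 : x ∈ V a h 0 <;> by_cases h1 : x ∈ V a h 1 <;> simp [sign, h0, h1]

lemma transition_of_mem {a h p α : ℝ} {q : Fin 2 → Fin 3 → ℝ} (ha : 0 < a) (f : E → ℝ)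
    {x : E} {i : Fin 2} (hx : x ∈ V a h i) :
    transition a h p α q f x = ∑ k, weight p α q i k * f (x + jump a h i k) := by
  have hd := disjoint_V (h := h) (x := x) ha
  fin_cases i
  · have : x ∉ V a h 1 := fun h1 => hd hx h1
    have hx : x ∈ V a h 0 := hx
    simp [transition, hx, this, Fin.sum_univ_five, Fin.sum_univ_three, weight, jump, add_assoc]
  · have : x ∉ V a h 0 := fun h1 => hd h1 hx
    have hx : x ∈ V a h 1 := hx
    simp [transition, hx, this, Fin.sum_univ_five, Fin.sum_univ_three, weight, jump, add_assoc]

/-- Only finitely many points are reachable in one jump from a finite set. -/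
lemma finite_reachable (a h : ℝ) {A : Set E} (hA : A.Finite) :
    {y | ∃ x ∈ A, ∃ i k, y = x + jump a h i k}.Finite := by
  refine (((hA.prod (finite_univ (α := Fin 2 × Fin 5)))).image
    fun t => t.1 + jump a h t.2.1 t.2.2).subset ?_
  rintro _ ⟨x, hx, i, k, rfl⟩
  exact ⟨(x, i, k), ⟨hx, mem_univ _⟩, rfl⟩

lemma sum_mul_add_sq_le {ι : Type*} [Fintype ι] {w d : ι → ℝ} {K : ℝ} (g : ℝ)
    (hw : ∀ k, 0 ≤ w k) (hw1 : ∑ k, w k = 1) (hwd : ∑ k, w k * d k = 0) (hd : ∀ k, |d k| ≤ K) :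
    ∑ k, w k * (g + d k) ^ 2 ≤ g ^ 2 + K ^ 2 := by
  calc ∑ k, w k * (g + d k) ^ 2
      ≤ ∑ k, (w k * (g ^ 2 + K ^ 2) + w k * d k * (2 * g)) := by
        refine Finset.sum_le_sum fun k _ => ?_
        have h2 : d k ^ 2 ≤ K ^ 2 := sq_le_sq' (abs_le.1 (hd k)).1 (abs_le.1 (hd k)).2
        nlinarith [mul_le_mul_of_nonneg_left h2 (hw k)]
    _ = g ^ 2 + K ^ 2 := by
        rw [Finset.sum_add_distrib, ← Finset.sum_mul, ← Finset.sum_mul, hw1, hwd]; ring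

lemma sum_mul_add_pow_four_le {ι : Type*} [Fintype ι] {w d : ι → ℝ} {K : ℝ} (g : ℝ)
    (hw : ∀ k, 0 ≤ w k) (hw1 : ∑ k, w k = 1) (hwd : ∑ k, w k * d k = 0) (hd : ∀ k, |d k| ≤ K) :
    ∑ k, w k * (g + d k) ^ 4 ≤ g ^ 4 + 8 * K ^ 2 * g ^ 2 + 3 * K ^ 4 := by
  calc ∑ k, w k * (g + d k) ^ 4
      ≤ ∑ k, (w k * (g ^ 4 + 8 * K ^ 2 * g ^ 2 + 3 * K ^ 4) + w k * d k * (4 * g ^ 3)) := by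
        refine Finset.sum_le_sum fun k _ => ?_
        have h2 : d k ^ 2 ≤ K ^ 2 := sq_le_sq' (abs_le.1 (hd k)).1 (abs_le.1 (hd k)).2
        have h4 : d k ^ 2 * d k ^ 2 ≤ K ^ 2 * K ^ 2 := by gcongr
        have hg : g ^ 2 * d k ^ 2 ≤ g ^ 2 * K ^ 2 := by gcongr
        have h3 : 4 * g * d k ^ 3 ≤ 2 * (g ^ 2 * d k ^ 2 + d k ^ 2 * d k ^ 2) := by
          nlinarith [mul_nonneg (sq_nonneg (d k)) (sq_nonneg (g - d k))]
        have : (g + d k) ^ 4 ≤ g ^ 4 + 8 * K ^ 2 * g ^ 2 + 3 * K ^ 4 + d k * (4 * g ^ 3) := by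
          linarith [show (g + d k) ^ 4 = g ^ 4 + 4 * g ^ 3 * d k + 6 * (g ^ 2 * d k ^ 2)
            + 4 * g * d k ^ 3 + d k ^ 2 * d k ^ 2 by ring, show K ^ 2 * K ^ 2 = K ^ 4 by ring]
        linarith [mul_le_mul_of_nonneg_left this (hw k)]
    _ = g ^ 4 + 8 * K ^ 2 * g ^ 2 + 3 * K ^ 4 := by
        rw [Finset.sum_add_distrib, ← Finset.sum_mul, ← Finset.sum_mul, hw1, hwd]; ring

/-- Fourth moments of order `n²` force almost sure sublinear growth. -/
lemma ae_tendsto_div_of_integral_pow_four_le {Ω : Type*} [MeasurableSpace Ω] {P : Measure Ω}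
    {X : ℕ → Ω → ℝ} {C : ℝ} (hX : ∀ n, Integrable (fun ω => X n ω ^ 4) P)
    (hXm : ∀ n, Measurable (X n))
    (hC : ∀ n : ℕ, ∫ ω, X n ω ^ 4 ∂P ≤ C * ((n : ℝ) + 1) ^ 2) :
    ∀ᵐ ω ∂P, Tendsto (fun n : ℕ => X n ω / ((n : ℝ) + 1)) atTop (nhds 0) := by
  have hs : Summable fun n : ℕ => C / ((n : ℝ) + 1) ^ 2 := by
    have := (summable_nat_add_iff 1).2 (Real.summable_one_div_nat_pow.2 one_lt_two)
    simpa [div_eq_mul_inv] using this.mul_left C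
  have hb : ∀ n : ℕ, ∫⁻ ω, ENNReal.ofReal ((X n ω / ((n : ℝ) + 1)) ^ 4) ∂P
      ≤ ENNReal.ofReal (C / ((n : ℝ) + 1) ^ 2) := by
    intro n
    have hn : (0 : ℝ) < (n : ℝ) + 1 := by positivity
    simp_rw [div_pow]
    rw [← ofReal_integral_eq_lintegral_ofReal ((hX n).div_const _)
      (Eventually.of_forall fun ω => by positivity)]
    refine ENNReal.ofReal_le_ofReal ?_
    rw [integral_div, div_le_div_iff₀ (by positivity) (by positivity)]
    calc _ ≤ C * ((n : ℝ) + 1) ^ 2 * ((n : ℝ) + 1) ^ 2 := by gcongr; exact hC n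
      _ = _ := by ring
  have hfin : ∫⁻ ω, ∑' n : ℕ, ENNReal.ofReal ((X n ω / ((n : ℝ) + 1)) ^ 4) ∂P ≠ ⊤ := by
    rw [lintegral_tsum fun n => by have := hXm n; fun_prop]
    exact ne_top_of_le_ne_top hs.tsum_ofReal_ne_top (ENNReal.tsum_le_tsum hb)
  filter_upwards [ae_lt_top' (AEMeasurable.tsum fun n => by
    have := hXm n; fun_prop) hfin] with ω hω
  have h0 := ENNReal.tendsto_atTop_zero_of_tsum_ne_top hω.ne
  have h1 := (ENNReal.tendsto_toReal ENNReal.zero_ne_top).comp h0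
  have h2 : Tendsto (fun n : ℕ => |X n ω / ((n : ℝ) + 1)| ^ 4) atTop (nhds 0) := by
    refine h1.congr fun n => ?_
    simp only [Function.comp]
    rw [ENNReal.toReal_ofReal (by positivity), Even.pow_abs (by decide)]
  rw [tendsto_zero_iff_abs_tendsto_zero]
  have h3 := h2.rpow_const (p := 1 / 4) (by norm_num)
  rw [Real.zero_rpow (by norm_num)] at h3
  refine h3.congr fun n => ?_
  rw [← Real.rpow_natCast, ← Real.rpow_mul (abs_nonneg _)]
  norm_num

namespace IsRWI

variable {Ω : Type} [MeasurableSpace Ω] {P : Measure Ω} {a h p α : ℝ} {q : Fin 2 → Fin 3 → ℝ}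
  {S : ℕ → Ω → E} {F : ℕ → MeasurableSpace Ω}

lemma filtration_le (hRW : IsRWI P a h p α q S F) (n : ℕ) : F n ≤ ‹MeasurableSpace Ω› := by
  rw [hRW.hF n]
  refine Measurable.comap_le (measurable_pi_lambda _ fun k => ?_)
  exact (hRW.hSmeas _).sub (hRW.hSmeas _)

lemma integral_succ_of_bounded (hRW : IsRWI P a h p α q S F) (n : ℕ) {f : E → ℝ}
    (hf : Measurable f) (hb : ∃ C, ∀ x, |f x| ≤ C) :
    ∫ ω, f (S (n + 1) ω) ∂P = ∫ ω, transition a h p α q f (S n ω) ∂P := by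
  have := hRW.prob
  rw [← integral_condExp (hRW.filtration_le n)]
  exact integral_congr_ae (hRW.hTrans n f hf hb)

lemma exists_finite_support (hRW : IsRWI P a h p α q S F) (n : ℕ) :
    ∃ A : Set E, A.Finite ∧ (∀ x ∈ A, ∃ i, x ∈ V a h i) ∧ ∀ᵐ ω ∂P, S n ω ∈ A := by
  have := hRW.prob
  induction n with
  | zero =>
    exact ⟨{0}, finite_singleton 0, by rintro _ rfl; exact ⟨0, zero_mem_V a h⟩,
      Eventually.of_forall fun ω => by simp [hRW.hS0 ω]⟩
  | succ n ih =>
    obtain ⟨A, hAf, hAV, hA⟩ := ih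
    set B : Set E := {y | ∃ x ∈ A, ∃ i k, y = x + jump a h i k} ∩ {y | ∃ i, y ∈ V a h i}
    have hBf : B.Finite := (finite_reachable a h hAf).inter_of_left _
    refine ⟨B, hBf, fun x hx => hx.2, ?_⟩
    have hBm := hBf.measurableSet
    have hint := hRW.integral_succ_of_bounded n (f := B.indicator fun _ => (1 : ℝ))
      (measurable_const.indicator hBm) ⟨1, fun x => by
        by_cases hx : x ∈ B <;> simp [hx]⟩
    have hone : ∫ ω, transition a h p α q (B.indicator fun _ => (1 : ℝ)) (S n ω) ∂P = 1 := by
      rw [integral_congr_ae (g := fun _ => (1 : ℝ))]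
      · simp
      filter_upwards [hA] with ω hω
      obtain ⟨i, hi⟩ := hAV _ hω
      rw [transition_of_mem hRW.ha _ hi]
      refine Eq.trans ?_ (sum_weight (α := α) hRW.hqsum i)
      refine Finset.sum_congr rfl fun k _ => ?_
      obtain ⟨i', hi', -⟩ := exists_add_jump_mem hi k
      have hmem : S n ω + jump a h i k ∈ B := ⟨⟨_, hω, i, k, rfl⟩, i', hi'⟩
      rw [indicator_of_mem hmem, mul_one]
    have hpre : MeasurableSet (S (n + 1) ⁻¹' B) := hRW.hSmeas _ hBm
    have hind : ∫ ω, B.indicator (fun _ => (1 : ℝ)) (S (n + 1) ω) ∂P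
        = P.real (S (n + 1) ⁻¹' B) := by
      rw [← integral_indicator_one hpre]; rfl
    rw [hind, hone] at hint
    have h1 : P (S (n + 1) ⁻¹' B) = 1 := by
      rwa [Measure.real, ENNReal.toReal_eq_one_iff] at hint
    exact (prob_compl_eq_zero_iff hpre).2 h1

lemma integrable_comp (hRW : IsRWI P a h p α q S F) (n : ℕ) {f : E → ℝ} (hf : Measurable f) :
    Integrable (fun ω => f (S n ω)) P := by
  have := hRW.prob
  obtain ⟨A, hAf, -, hA⟩ := hRW.exists_finite_support n
  obtain ⟨C, hC⟩ := (hAf.image fun x => ‖f x‖).bddAbove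
  refine Integrable.of_bound (hf.comp (hRW.hSmeas n)).aestronglyMeasurable C ?_
  filter_upwards [hA] with ω hω using hC ⟨_, hω, rfl⟩

lemma integral_succ (hRW : IsRWI P a h p α q S F) (n : ℕ) {f : E → ℝ} (hf : Measurable f) :
    ∫ ω, f (S (n + 1) ω) ∂P = ∫ ω, transition a h p α q f (S n ω) ∂P := by
  obtain ⟨A, hAf, hAV, hA⟩ := hRW.exists_finite_support n
  obtain ⟨A', hAf', -, hA'⟩ := hRW.exists_finite_support (n + 1)
  set B : Set E := A' ∪ {y | ∃ x ∈ A, ∃ i k, y = x + jump a h i k}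
  have hBf : B.Finite := hAf'.union (finite_reachable a h hAf)
  obtain ⟨C, hC⟩ := (hBf.image fun x => |f x|).bddAbove
  have hbdd : ∃ C, ∀ x, |B.indicator f x| ≤ C := by
    refine ⟨max C 0, fun x => ?_⟩
    by_cases hx : x ∈ B
    · simpa [hx] using Or.inl (hC ⟨x, hx, rfl⟩)
    · simp [hx]
  have hint := hRW.integral_succ_of_bounded n (hf.indicator hBf.measurableSet) hbdd
  have hl : ∫ ω, B.indicator f (S (n + 1) ω) ∂P = ∫ ω, f (S (n + 1) ω) ∂P := by
    refine integral_congr_ae ?_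
    filter_upwards [hA'] with ω hω
    have hmem : S (n + 1) ω ∈ B := Or.inl hω
    rw [indicator_of_mem hmem]
  rw [← hl, hint]
  refine integral_congr_ae ?_
  filter_upwards [hA] with ω hω
  obtain ⟨i, hi⟩ := hAV _ hω
  rw [transition_of_mem hRW.ha _ hi, transition_of_mem hRW.ha _ hi]
  refine Finset.sum_congr rfl fun k _ => ?_
  have hmem : S n ω + jump a h i k ∈ B := Or.inr ⟨_, hω, i, k, rfl⟩
  rw [indicator_of_mem hmem]

lemma integral_succ_le (hRW : IsRWI P a h p α q S F) (n : ℕ) {f g : E → ℝ} (hf : Measurable f)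
    (hg : Measurable g)
    (hfg : ∀ i, ∀ x ∈ V a h i, ∑ k, weight p α q i k * f (x + jump a h i k) ≤ g x) :
    ∫ ω, f (S (n + 1) ω) ∂P ≤ ∫ ω, g (S n ω) ∂P := by
  obtain ⟨A, -, hAV, hA⟩ := hRW.exists_finite_support n
  have hm : Measurable (transition a h p α q f) := by
    refine Finset.measurable_sum _ fun i _ => ?_
    refine (measurable_const.indicator (countable_V a h i).measurableSet).mul ?_
    fun_prop
  rw [hRW.integral_succ n hf]
  refine integral_mono_ae (hRW.integrable_comp n hm) (hRW.integrable_comp n hg) ?_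
  filter_upwards [hA] with ω hω
  obtain ⟨i, hi⟩ := hAV _ hω
  rw [transition_of_mem hRW.ha _ hi]
  exact hfg i _ hi

lemma exists_corrector (hRW : IsRWI P a h p α q S F) (l : Fin 3) :
    ∃ c : ℝ, 2 * (1 - p) * c = thetaI a p q l := by
  by_cases hp : p = 1
  · subst hp
    have hz : ∀ i j, q i j = 0 := by
      intro i j
      have h0 := hRW.hq i 0
      have h1 := hRW.hq i 1
      have h2 := hRW.hq i 2
      have hs := hRW.hqsum i
      fin_cases j <;> simp <;> linarith
    refine ⟨0, ?_⟩
    fin_cases l <;> simp [thetaI, uu, vv, hz]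
  · have : 1 - p ≠ 0 := sub_ne_zero.2 (Ne.symm hp)
    exact ⟨thetaI a p q l / (2 * (1 - p)), by field_simp⟩

/-- The `l`-th coordinate, centred and corrected, grows sublinearly. -/
lemma ae_tendsto_corrected (hRW : IsRWI P a h p α q S F) (l : Fin 3) {c : ℝ}
    (hc : 2 * (1 - p) * c = thetaI a p q l) :
    ∀ᵐ ω ∂P, Tendsto (fun n : ℕ => (S n ω l - n * muI a h p α q l + c * sign a h (S n ω))
      / ((n : ℝ) + 1)) atTop (nhds 0) := by
  have := hRW.prob
  set m := muI a h p α q l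
  set G : ℕ → E → ℝ := fun n x => x l - n * m + c * sign a h x with hG
  set d : Fin 2 → Fin 5 → ℝ := fun i k =>
    jump a h i k l - m + c * ((flip k - 1) * typeSign i) with hd
  set K : ℝ := |c| + ∑ i, ∑ k, |d i k|
  have hGm : ∀ n, Measurable (G n) := fun n => by
    have := measurable_sign a h
    fun_prop
  have hcK : |c| ≤ K := le_add_of_nonneg_right (by positivity)
  have hdK : ∀ i k, |d i k| ≤ K := fun i k =>
    calc |d i k| ≤ ∑ k, |d i k| :=
          Finset.single_le_sum (f := fun k => |d i k|) (fun _ _ => abs_nonneg _) (Finset.mem_univ k)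
      _ ≤ ∑ i, ∑ k, |d i k| := Finset.single_le_sum (f := fun i => ∑ k, |d i k|)
          (fun _ _ => by positivity) (Finset.mem_univ i)
      _ ≤ K := le_add_of_nonneg_left (abs_nonneg c)
  have hw0 := weight_nonneg hRW.hp0 hRW.hα0.le hRW.hα1.le hRW.hq
  have hw1 := sum_weight (α := α) hRW.hqsum
  have hmean : ∀ i, ∑ k, weight p α q i k * d i k = 0 := fun i => by
    have h1 := sum_weight_mul_jump (a := a) (h := h) (α := α) hRW.hqsum i l
    have h2 := sum_weight_mul_flip (α := α) hRW.hqsum i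
    calc ∑ k, weight p α q i k * d i k
        = ∑ k, weight p α q i k * jump a h i k l - (∑ k, weight p α q i k) * m
          + c * typeSign i * (∑ k, weight p α q i k * flip k - ∑ k, weight p α q i k) := by
          rw [Finset.sum_mul, ← Finset.sum_sub_distrib, ← Finset.sum_sub_distrib, Finset.mul_sum,
            ← Finset.sum_add_distrib]
          exact Finset.sum_congr rfl fun k _ => by simp only [hd]; ring
      _ = 0 := by rw [h1, h2, hw1, ← hc]; ring
  have hstep : ∀ n i, ∀ x ∈ V a h i, ∀ k, G (n + 1) (x + jump a h i k) = G n x + d i k := by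
    intro n i x hx k
    obtain ⟨i', hi', hs⟩ := exists_add_jump_mem hx k
    simp only [hG, hd, sign_of_mem hRW.ha hi', sign_of_mem hRW.ha hx, hs, PiLp.add_apply]
    push_cast
    ring
  have hG0 : ∀ ω, G 0 (S 0 ω) = c := fun ω => by
    simp [hG, hRW.hS0, sign_of_mem hRW.ha (zero_mem_V a h), typeSign]
  have hc2 : c ^ 2 ≤ K ^ 2 := sq_le_sq' (abs_le.1 hcK).1 (abs_le.1 hcK).2
  have hm2 : ∀ n : ℕ, ∫ ω, G n (S n ω) ^ 2 ∂P ≤ K ^ 2 * (n + 1) := by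
    intro n
    induction n with
    | zero => simpa [hG0] using hc2
    | succ n ih =>
      have := hRW.integral_succ_le n (f := fun x => G (n + 1) x ^ 2)
        (g := fun x => G n x ^ 2 + K ^ 2) ((hGm _).pow_const 2) (((hGm _).pow_const 2).add_const _)
        fun i x hx => by
          simp only [hstep n i x hx]
          exact sum_mul_add_sq_le _ (hw0 i) (hw1 i) (hmean i) (hdK i)
      rw [integral_add (hRW.integrable_comp n ((hGm n).pow_const 2)) (integrable_const _)] at this
      simp only [integral_const, probReal_univ, one_smul] at this
      push_cast
      linarith
  have hm4 : ∀ n : ℕ, ∫ ω, G n (S n ω) ^ 4 ∂P ≤ 11 * K ^ 4 * ((n : ℝ) + 1) ^ 2 := by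
    intro n
    induction n with
    | zero =>
      have : c ^ 2 * c ^ 2 ≤ K ^ 2 * K ^ 2 := by gcongr
      simp [hG0]
      nlinarith [sq_nonneg (K ^ 2)]
    | succ n ih =>
      have := hRW.integral_succ_le n (f := fun x => G (n + 1) x ^ 4)
        (g := fun x => G n x ^ 4 + 8 * K ^ 2 * G n x ^ 2 + 3 * K ^ 4) ((hGm _).pow_const 4)
        ((((hGm _).pow_const 4).add (((hGm _).pow_const 2).const_mul _)).add_const _)
        fun i x hx => by
          simp only [hstep n i x hx]
          exact sum_mul_add_pow_four_le _ (hw0 i) (hw1 i) (hmean i) (hdK i)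
      have i4 := hRW.integrable_comp n ((hGm n).pow_const 4)
      have i2 := (hRW.integrable_comp n ((hGm n).pow_const 2)).const_mul (8 * K ^ 2)
      rw [integral_add (by exact i4.add i2) (integrable_const _), integral_add i4 i2,
        integral_const_mul] at this
      simp only [integral_const, probReal_univ, one_smul] at this
      have h2 := mul_le_mul_of_nonneg_left (hm2 n) (show 0 ≤ 8 * K ^ 2 by positivity)
      have hK4 : 0 ≤ K ^ 4 := by positivity
      have hnK : 0 ≤ K ^ 4 * n := by positivity
      push_cast
      nlinarith
  exact ae_tendsto_div_of_integral_pow_four_le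
    (fun n => hRW.integrable_comp n ((hGm n).pow_const 4))
    (fun n => (hGm n).comp (hRW.hSmeas n)) hm4

end IsRWI

end RWI

theorem rwi_slln {Ω : Type} [MeasurableSpace Ω] (P : Measure Ω)
    (a h p α : ℝ) (q : Fin 2 → Fin 3 → ℝ)
    (S : ℕ → Ω → RWI.E) (F : ℕ → MeasurableSpace Ω)
    (hRW : RWI.IsRWI P a h p α q S F) :
    ∀ᵐ ω ∂P, Tendsto (fun n : ℕ => (n : ℝ)⁻¹ • S n ω) atTop (nhds (RWI.muI a h p α q)) := by
  have hcoord : ∀ l : Fin 3, ∀ᵐ ω ∂P,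
      Tendsto (fun n : ℕ => (n : ℝ)⁻¹ * S n ω l) atTop (nhds (RWI.muI a h p α q l)) := by
    intro l
    obtain ⟨c, hc⟩ := hRW.exists_corrector l
    filter_upwards [hRW.ae_tendsto_corrected l hc] with ω hω
    have hinv : Tendsto (fun n : ℕ => (n : ℝ)⁻¹) atTop (nhds 0) :=
      tendsto_inv_atTop_zero.comp tendsto_natCast_atTop_atTop
    have hsign : Tendsto (fun n : ℕ => (n : ℝ)⁻¹ * RWI.sign a h (S n ω)) atTop (nhds 0) :=
      hinv.zero_mul_isBoundedUnder_le
        (isBoundedUnder_of ⟨1, fun n => RWI.abs_sign_le a h (S n ω)⟩)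
    have hlim := ((hω.mul (hinv.const_add 1)).add_const (RWI.muI a h p α q l)).sub
      (hsign.const_mul c)
    simp only [zero_mul, zero_add, mul_zero, sub_zero] at hlim
    refine hlim.congr' ?_
    filter_upwards [eventually_gt_atTop 0] with n hn
    have : (n : ℝ) ≠ 0 := by positivity
    have : (n : ℝ) + 1 ≠ 0 := by positivity
    field_simp
    ring
  filter_upwards [ae_all_iff.2 hcoord] with ω hω
  have hpi : Tendsto (fun n : ℕ => EuclideanSpace.equiv (Fin 3) ℝ ((n : ℝ)⁻¹ • S n ω)) atTop
      (nhds (EuclideanSpace.equiv (Fin 3) ℝ (RWI.muI a h p α q))) :=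
    tendsto_pi_nhds.2 fun l => by simpa using hω l
  exact ((EuclideanSpace.equiv (Fin 3) ℝ).symm.continuous.tendsto _).comp hpi
end
end

section
/- (Strong law of large numbers for the RWG.) Suppose p > 0. Then almost surely S_n/n converges to μ + (p/(2−p))·m as n → ∞. -/
open MeasureTheory ProbabilityTheory Real Filter Set
open scoped BigOperators NNReal

noncomputable section

namespace RWG

abbrev E : Type := EuclideanSpace ℝ (Fin 3)

def vec (x y z : ℝ) : E := (EuclideanSpace.equiv (Fin 3) ℝ).symm ![x, y, z]

/-- The four families of vertices of the `2h` graphite lattice. -/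
def V (a h : ℝ) (i j : Fin 2) : Set E :=
  {v | ∃ k l n : ℤ, v =
    vec (a * ((-1 : ℝ) ^ ((i : ℕ) + 1) * (if j = 1 then (1 : ℝ) else 0) + (3 / 2) * k))
        (a * ((Real.sqrt 3 / 2) * k + Real.sqrt 3 * l))
        (h * (2 * n + (if i ≠ j then (1 : ℝ) else 0)))}

/-- Horizontal jump from a vertex of horizontal type `i` in direction `k`. -/
def w (a : ℝ) (i : Fin 2) (k : Fin 3) : E :=
  vec (a * Real.cos (2 * (k : ℕ) * π / 3 + (i : ℕ) * π))
      (a * Real.sin (2 * (k : ℕ) * π / 3 + (i : ℕ) * π)) 0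

/-- `S` is a random walk on graphite with parameters `a, h, p, α, q` and natural filtration `F`. -/
structure IsRWG {Ω : Type} [MeasurableSpace Ω] (P : Measure Ω)
    (a h p α : ℝ) (q : Fin 2 → Fin 2 → Fin 3 → ℝ)
    (S : ℕ → Ω → E) (F : ℕ → MeasurableSpace Ω) : Prop where
  prob : IsProbabilityMeasure P
  ha : 0 < a
  hh : 0 < h
  hp0 : 0 ≤ p
  hp1 : p ≤ 1
  hα0 : 0 < α
  hα1 : α < 1
  hq : ∀ i j k, 0 ≤ q i j k
  hqsum0 : ∀ i, q i 0 0 + q i 0 1 + q i 0 2 = 1 - p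
  hqsum1 : ∀ i, q i 1 0 + q i 1 1 + q i 1 2 = 1
  hS0 : ∀ ω, S 0 ω = 0
  hSmeas : ∀ n, Measurable (S n)
  hF : ∀ n, F n =
    MeasurableSpace.comap (fun ω (k : Fin n) => S ((k : ℕ) + 1) ω - S (k : ℕ) ω)
      MeasurableSpace.pi
  hTrans : ∀ (n : ℕ) (f : E → ℝ), Measurable f → (∃ C, ∀ x, |f x| ≤ C) →
    P[fun ω => f (S (n + 1) ω)|F n] =ᵐ[P]
      fun ω => ∑ i : Fin 2,
        ((V a h i 0).indicator (fun _ => (1 : ℝ)) (S n ω) *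
          (α * p * f (S n ω + vec 0 0 h) + (1 - α) * p * f (S n ω + vec 0 0 (-h)) +
            ∑ k : Fin 3, q i 0 k * f (S n ω + w a i k)) +
        (V a h i 1).indicator (fun _ => (1 : ℝ)) (S n ω) *
          ∑ k : Fin 3, q i 1 k * f (S n ω + w a i k))

def uu (q : Fin 2 → Fin 2 → Fin 3 → ℝ) (i j : Fin 2) : ℝ := q i j 1 + q i j 2

def vv (q : Fin 2 → Fin 2 → Fin 3 → ℝ) (i j : Fin 2) : ℝ := q i j 1 - q i j 2

def ss (q : Fin 2 → Fin 2 → Fin 3 → ℝ) (i j : Fin 2) : ℝ := uu q i j * (1 - uu q i j)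

def tt (q : Fin 2 → Fin 2 → Fin 3 → ℝ) (i j : Fin 2) : ℝ := vv q i j * (uu q i j - 1)

/-- The vector `μ` of the RWG. -/
def muG (a h p α : ℝ) (q : Fin 2 → Fin 2 → Fin 3 → ℝ) : E :=
  vec (3 * a / 8 * (-(uu q 0 0 + uu q 0 1) + (uu q 1 0 + uu q 1 1)))
      (a * Real.sqrt 3 / 8 * ((vv q 0 0 + vv q 0 1) - (vv q 1 0 + vv q 1 1)))
      (h * p / 2 * (2 * α - 1))

/-- The vector `m` of the RWG. -/
def mG (a h p α : ℝ) (q : Fin 2 → Fin 2 → Fin 3 → ℝ) : E :=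
  vec (3 * a / 8 * (-(uu q 0 0 - uu q 0 1) + (uu q 1 0 - uu q 1 1)))
      (a * Real.sqrt 3 / 8 * ((vv q 0 0 - vv q 0 1) - (vv q 1 0 - vv q 1 1)))
      (h * p / 2 * (2 * α - 1))

/-- The vector `θ` of the RWG. -/
def thetaG (a p : ℝ) (q : Fin 2 → Fin 2 → Fin 3 → ℝ) : E :=
  vec (a * ((1 - p / 2) - 3 / 8 * ((uu q 0 0 + uu q 0 1) + (uu q 1 0 + uu q 1 1))))
      (a * Real.sqrt 3 / 8 * ((vv q 0 0 + vv q 0 1) + (vv q 1 0 + vv q 1 1))) 0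

/-- The vector `ρ` of the RWG. -/
def rhoG (a p : ℝ) (q : Fin 2 → Fin 2 → Fin 3 → ℝ) : E :=
  vec (a * (-(p / 2) - 3 / 8 * ((uu q 0 0 - uu q 0 1) + (uu q 1 0 - uu q 1 1))))
      (a * Real.sqrt 3 / 8 * ((vv q 0 0 - vv q 0 1) + (vv q 1 0 - vv q 1 1))) 0

/-- The vector `ζ = (0, 0, hp(2α−1))`. -/
def zetaG (h p α : ℝ) : E := vec 0 0 (h * p * (2 * α - 1))

/-- The indicator process `i_n`. -/
def iP {Ω : Type} (a h : ℝ) (S : ℕ → Ω → E) (n : ℕ) (ω : Ω) : ℝ :=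
  (V a h 0 0 ∪ V a h 0 1).indicator (fun _ => (1 : ℝ)) (S n ω) -
    (V a h 1 0 ∪ V a h 1 1).indicator (fun _ => (1 : ℝ)) (S n ω)

/-- The indicator process `j_n`. -/
def jP {Ω : Type} (a h : ℝ) (S : ℕ → Ω → E) (n : ℕ) (ω : Ω) : ℝ :=
  (V a h 0 0 ∪ V a h 1 0).indicator (fun _ => (1 : ℝ)) (S n ω) -
    (V a h 0 1 ∪ V a h 1 1).indicator (fun _ => (1 : ℝ)) (S n ω)

/-- The indicator process `k_n`. -/
def kP {Ω : Type} (a h : ℝ) (S : ℕ → Ω → E) (n : ℕ) (ω : Ω) : ℝ :=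
  (V a h 0 0 ∪ V a h 1 1).indicator (fun _ => (1 : ℝ)) (S n ω) -
    (V a h 0 1 ∪ V a h 1 0).indicator (fun _ => (1 : ℝ)) (S n ω)

/-- The matrix `σ²` of the RWG. -/
def sigmaG (a h p α : ℝ) (q : Fin 2 → Fin 2 → Fin 3 → ℝ) : Matrix (Fin 3) (Fin 3) ℝ :=
  !![a ^ 2 / 4 * (2 * p * (1 - p) + 9 / 4 * (ss q 0 0 + ss q 1 0 + ss q 0 1 + ss q 1 1)
        - 3 * p * (uu q 0 0 + uu q 1 0)),
     a ^ 2 * Real.sqrt 3 / 16 * (3 * (tt q 0 0 + tt q 1 0 + tt q 0 1 + tt q 1 1)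
        + 2 * p * (vv q 0 0 + vv q 1 0)),
     a * h / 8 * (-4 * p * (1 - p) * (2 * α - 1)
        + 3 * p * (2 * α - 1) * (uu q 0 0 + uu q 1 0));
     a ^ 2 * Real.sqrt 3 / 16 * (3 * (tt q 0 0 + tt q 1 0 + tt q 0 1 + tt q 1 1)
        + 2 * p * (vv q 0 0 + vv q 1 0)),
     3 * a ^ 2 / 16 * ((uu q 0 0 + uu q 1 0 + uu q 0 1 + uu q 1 1)
        - ((vv q 0 0) ^ 2 + (vv q 1 0) ^ 2 + (vv q 0 1) ^ 2 + (vv q 1 1) ^ 2)),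
     -(a * h * Real.sqrt 3 / 8) * (p * (2 * α - 1) * (vv q 0 0 + vv q 1 0));
     a * h / 8 * (-4 * p * (1 - p) * (2 * α - 1)
        + 3 * p * (2 * α - 1) * (uu q 0 0 + uu q 1 0)),
     -(a * h * Real.sqrt 3 / 8) * (p * (2 * α - 1) * (vv q 0 0 + vv q 1 0)),
     h ^ 2 * p / 2 * (1 - p * (2 * α - 1) ^ 2)]

/-- The matrix `γ` of the RWG. -/
def gammaG (a h p α : ℝ) (q : Fin 2 → Fin 2 → Fin 3 → ℝ) : Matrix (Fin 3) (Fin 3) ℝ :=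
  !![a ^ 2 / 4 * (2 * p * (1 - p) + 9 / 4 * (ss q 0 0 + ss q 1 0 - ss q 0 1 - ss q 1 1)
        - 3 * p * (uu q 0 0 + uu q 1 0)),
     a ^ 2 * Real.sqrt 3 / 16 * (3 * (tt q 0 0 + tt q 1 0 - tt q 0 1 - tt q 1 1)
        + 2 * p * (vv q 0 0 + vv q 1 0)),
     a * h / 8 * (-4 * p * (1 - p) * (2 * α - 1)
        + 3 * p * (2 * α - 1) * (uu q 0 0 + uu q 1 0));
     a ^ 2 * Real.sqrt 3 / 16 * (3 * (tt q 0 0 + tt q 1 0 - tt q 0 1 - tt q 1 1)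
        + 2 * p * (vv q 0 0 + vv q 1 0)),
     3 * a ^ 2 / 16 * ((uu q 0 0 + uu q 1 0 - uu q 0 1 - uu q 1 1)
        - ((vv q 0 0) ^ 2 + (vv q 1 0) ^ 2 - (vv q 0 1) ^ 2 - (vv q 1 1) ^ 2)),
     -(a * h * Real.sqrt 3 / 8) * (p * (2 * α - 1) * (vv q 0 0 + vv q 1 0));
     a * h / 8 * (-4 * p * (1 - p) * (2 * α - 1)
        + 3 * p * (2 * α - 1) * (uu q 0 0 + uu q 1 0)),
     -(a * h * Real.sqrt 3 / 8) * (p * (2 * α - 1) * (vv q 0 0 + vv q 1 0)),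
     h ^ 2 * p / 2 * (1 - p * (2 * α - 1) ^ 2)]

/-- The matrix `δ` of the RWG. -/
def deltaG (a h p α : ℝ) (q : Fin 2 → Fin 2 → Fin 3 → ℝ) : Matrix (Fin 3) (Fin 3) ℝ :=
  !![a ^ 2 / 4 * (9 / 4 * (ss q 0 0 - ss q 1 0 - ss q 0 1 + ss q 1 1)
        - 3 * p * (uu q 0 0 - uu q 1 0)),
     a ^ 2 * Real.sqrt 3 / 16 * (3 * (tt q 0 0 - tt q 1 0 - tt q 0 1 + tt q 1 1)
        + 2 * p * (vv q 0 0 - vv q 1 0)),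
     a * h / 8 * (3 * p * (2 * α - 1) * (uu q 0 0 - uu q 1 0));
     a ^ 2 * Real.sqrt 3 / 16 * (3 * (tt q 0 0 - tt q 1 0 - tt q 0 1 + tt q 1 1)
        + 2 * p * (vv q 0 0 - vv q 1 0)),
     3 * a ^ 2 / 16 * ((uu q 0 0 - uu q 1 0 - uu q 0 1 + uu q 1 1)
        - ((vv q 0 0) ^ 2 - (vv q 1 0) ^ 2 - (vv q 0 1) ^ 2 + (vv q 1 1) ^ 2)),
     -(a * h * Real.sqrt 3 / 8) * (p * (2 * α - 1) * (vv q 0 0 - vv q 1 0));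
     a * h / 8 * (3 * p * (2 * α - 1) * (uu q 0 0 - uu q 1 0)),
     -(a * h * Real.sqrt 3 / 8) * (p * (2 * α - 1) * (vv q 0 0 - vv q 1 0)),
     0]

/-- A probability measure on `ℝ³` is the centered Gaussian law with covariance matrix `Γ`
if every linear functional pushes it to the corresponding one-dimensional Gaussian law. -/
def IsCenteredGaussian (G : Measure E) (Γ : Matrix (Fin 3) (Fin 3) ℝ) : Prop :=
  IsProbabilityMeasure G ∧
    ∀ u : Fin 3 → ℝ, G.map (fun x => ∑ r, u r * x r) =
      gaussianReal 0 (Real.toNNReal (∑ r, ∑ c, u r * Γ r c * u c))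

/-- View a point of `ℝ³` as a plain function on indices. -/
def toFun (x : E) : Fin 3 → ℝ := x

end RWG

namespace RWG

@[simp] lemma vec_zero (x y z : ℝ) : vec x y z 0 = x := rfl

@[simp] lemma vec_one (x y z : ℝ) : vec x y z 1 = y := rfl

@[simp] lemma vec_two (x y z : ℝ) : vec x y z 2 = z := rfl

lemma mem_V_iff {a h : ℝ} {i j : Fin 2} {x : E} : x ∈ V a h i j ↔ ∃ k l n : ℤ,
    x 0 = a * ((-1 : ℝ) ^ ((i : ℕ) + 1) * (if j = 1 then (1 : ℝ) else 0) + (3 / 2) * k) ∧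
    x 1 = a * ((Real.sqrt 3 / 2) * k + Real.sqrt 3 * l) ∧
    x 2 = h * (2 * n + (if i ≠ j then (1 : ℝ) else 0)) := by
  constructor
  · rintro ⟨k, l, n, rfl⟩
    exact ⟨k, l, n, rfl, rfl, rfl⟩
  · rintro ⟨k, l, n, h0, h1, h2⟩
    refine ⟨k, l, n, ?_⟩
    ext r
    fin_cases r
    · exact h0
    · exact h1
    · exact h2

lemma V_unique {a h : ℝ} (ha : 0 < a) (hh : 0 < h) {i j i' j' : Fin 2} {x : E}
    (hx : x ∈ V a h i j) (hx' : x ∈ V a h i' j') : i = i' ∧ j = j' := by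
  obtain ⟨k, l, n, h0, -, h2⟩ := mem_V_iff.1 hx
  obtain ⟨k', l', n', h0', -, h2'⟩ := mem_V_iff.1 hx'
  have e0 := mul_left_cancel₀ ha.ne' (h0.symm.trans h0')
  have e2 := mul_left_cancel₀ hh.ne' (h2.symm.trans h2')
  have c0 (s s' : ℤ) (e : (s : ℝ) + 3 / 2 * k = s' + 3 / 2 * k') :
      2 * s + 3 * k = 2 * s' + 3 * k' := by
    have : (2 * s + 3 * k : ℝ) = 2 * s' + 3 * k' := by linarith
    exact_mod_cast this
  have c2 (s s' : ℤ) (e : 2 * (n : ℝ) + s = 2 * n' + s') : 2 * n + s = 2 * n' + s' := by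
    exact_mod_cast e
  fin_cases i <;> fin_cases j <;> fin_cases i' <;> fin_cases j' <;>
    simp at e0 e2 ⊢ <;>
    first
    | (have := c0 0 1 (by push_cast; linarith); omega)
    | (have := c0 1 0 (by push_cast; linarith); omega)
    | (have := c2 0 1 (by push_cast; linarith); omega)
    | (have := c2 1 0 (by push_cast; linarith); omega)

lemma countable_V (a h : ℝ) (i j : Fin 2) : (V a h i j).Countable := by
  refine (countable_range fun t : ℤ × ℤ × ℤ =>
    vec (a * ((-1 : ℝ) ^ ((i : ℕ) + 1) * (if j = 1 then (1 : ℝ) else 0) + (3 / 2) * t.1))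
        (a * ((Real.sqrt 3 / 2) * t.1 + Real.sqrt 3 * t.2.1))
        (h * (2 * t.2.2 + (if i ≠ j then (1 : ℝ) else 0)))).mono ?_
  rintro x ⟨k, l, n, rfl⟩
  exact ⟨(k, l, n), rfl⟩

lemma w_eq (a : ℝ) (i : Fin 2) (k : Fin 3) :
    w a i k = vec (a * ((-1) ^ (i : ℕ) * ![1, -(1 / 2), -(1 / 2)] k))
      (a * ((-1) ^ (i : ℕ) * ![0, √3 / 2, -(√3 / 2)] k)) 0 := by
  have c1 : Real.cos (2 * π / 3) = -(1 / 2) := by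
    rw [show 2 * π / 3 = π - π / 3 by ring, Real.cos_pi_sub, Real.cos_pi_div_three]
  have s1 : Real.sin (2 * π / 3) = √3 / 2 := by
    rw [show 2 * π / 3 = π - π / 3 by ring, Real.sin_pi_sub, Real.sin_pi_div_three]
  have c2 : Real.cos (2 * 2 * π / 3) = -(1 / 2) := by
    rw [show 2 * 2 * π / 3 = π / 3 + π by ring, Real.cos_add_pi, Real.cos_pi_div_three]
  have s2 : Real.sin (2 * 2 * π / 3) = -(√3 / 2) := by
    rw [show 2 * 2 * π / 3 = π / 3 + π by ring, Real.sin_add_pi, Real.sin_pi_div_three]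
  norm_num at c1 s1 c2 s2
  unfold w
  fin_cases i <;> fin_cases k <;>
    norm_num [Real.cos_add_pi, Real.sin_add_pi, c1, s1, c2, s2]

lemma add_vertical_mem_V {a h : ℝ} {i : Fin 2} {x : E} (hx : x ∈ V a h i 0) :
    x + vec 0 0 h ∈ V a h (1 - i) 0 ∧ x + vec 0 0 (-h) ∈ V a h (1 - i) 0 := by
  obtain ⟨k, l, n, h0, h1, h2⟩ := mem_V_iff.1 hx
  simp only [mem_V_iff]
  fin_cases i
  · refine ⟨⟨k, l, n, ?_⟩, ⟨k, l, n - 1, ?_⟩⟩ <;>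
      refine ⟨?_, ?_, ?_⟩ <;> simp at h0 h1 h2 ⊢ <;> simp [h0, h1, h2] <;> ring
  · refine ⟨⟨k, l, n + 1, ?_⟩, ⟨k, l, n, ?_⟩⟩ <;>
      refine ⟨?_, ?_, ?_⟩ <;> simp at h0 h1 h2 ⊢ <;> simp [h0, h1, h2] <;> ring

lemma add_w_mem_V {a h : ℝ} {i j : Fin 2} {x : E} (hx : x ∈ V a h i j) (k : Fin 3) :
    x + w a i k ∈ V a h (1 - i) (1 - j) := by
  obtain ⟨b, l, n, h0, h1, h2⟩ := mem_V_iff.1 hx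
  rw [w_eq, mem_V_iff]
  fin_cases i <;> fin_cases k
  · refine ⟨b, l, n, ?_⟩
    fin_cases j <;> simp at h0 h1 h2 ⊢ <;> simp [h0, h1, h2] <;> ring
  · refine ⟨b - 1, l + 1, n, ?_⟩
    fin_cases j <;> simp at h0 h1 h2 ⊢ <;> simp [h0, h1, h2] <;> constructor <;> ring
  · refine ⟨b - 1, l, n, ?_⟩
    fin_cases j <;> simp at h0 h1 h2 ⊢ <;> simp [h0, h1, h2] <;> constructor <;> ring
  · refine ⟨b, l, n, ?_⟩
    fin_cases j <;> simp at h0 h1 h2 ⊢ <;> simp [h0, h1, h2] <;> ring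
  · refine ⟨b + 1, l - 1, n, ?_⟩
    fin_cases j <;> simp at h0 h1 h2 ⊢ <;> simp [h0, h1, h2] <;> constructor <;> ring
  · refine ⟨b + 1, l, n, ?_⟩
    fin_cases j <;> simp at h0 h1 h2 ⊢ <;> simp [h0, h1, h2] <;> constructor <;> ring

/-- The five possible jumps from a vertex of type `i`: two vertical, three horizontal. -/
def step (a h : ℝ) (i : Fin 2) : Fin 5 → E :=
  ![vec 0 0 h, vec 0 0 (-h), w a i 0, w a i 1, w a i 2]

/-- The probability of each jump from a vertex of `V i j`. -/
def wt (p α : ℝ) (q : Fin 2 → Fin 2 → Fin 3 → ℝ) (i j : Fin 2) : Fin 5 → ℝ :=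
  ![if j = 0 then α * p else 0, if j = 0 then (1 - α) * p else 0, q i j 0, q i j 1, q i j 2]

/-- The second coordinate of the type of the vertex reached from `V i j` by each jump. -/
def target (j : Fin 2) : Fin 5 → Fin 2 := ![0, 0, 1 - j, 1 - j, 1 - j]

lemma add_step_mem_V {a h p α : ℝ} {q : Fin 2 → Fin 2 → Fin 3 → ℝ} {i j : Fin 2} {x : E}
    (hx : x ∈ V a h i j) {k : Fin 5} (hk : wt p α q i j k ≠ 0) :
    x + step a h i k ∈ V a h (1 - i) (target j k) := by
  have vert (hj : j = 0) : x ∈ V a h i 0 := hj ▸ hx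
  fin_cases k
  · exact (add_vertical_mem_V (vert (by by_contra hj; simp [wt, hj] at hk))).1
  · exact (add_vertical_mem_V (vert (by by_contra hj; simp [wt, hj] at hk))).2
  · exact add_w_mem_V hx 0
  · exact add_w_mem_V hx 1
  · exact add_w_mem_V hx 2

/-- The vertex set of the graphite lattice. -/
def lattice (a h : ℝ) : Set E := {x | ∃ i j, x ∈ V a h i j}

lemma measurableSet_V (a h : ℝ) (i j : Fin 2) : MeasurableSet (V a h i j) :=
  (countable_V a h i j).measurableSet

lemma measurableSet_lattice (a h : ℝ) : MeasurableSet (lattice a h) := by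
  simp only [lattice, ofPred_exists]
  exact MeasurableSet.iUnion fun i => MeasurableSet.iUnion fun j => measurableSet_V a h i j

/-- A bound for the length of every jump. -/
def stepBound (a h : ℝ) : ℝ := ∑ i, ∑ k, ‖step a h i k‖

lemma norm_step_le (a h : ℝ) (i : Fin 2) (k : Fin 5) : ‖step a h i k‖ ≤ stepBound a h :=
  (Finset.single_le_sum (f := fun k => ‖step a h i k‖) (fun _ _ => norm_nonneg _)
    (Finset.mem_univ k)).trans
  (Finset.single_le_sum (f := fun i => ∑ k, ‖step a h i k‖)
    (fun _ _ => Finset.sum_nonneg fun _ _ => norm_nonneg _) (Finset.mem_univ i))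

section Walk

variable {Ω : Type} [MeasurableSpace Ω] {P : Measure Ω} {a h p α : ℝ}
  {q : Fin 2 → Fin 2 → Fin 3 → ℝ} {S : ℕ → Ω → E} {F : ℕ → MeasurableSpace Ω}

lemma IsRWG.wt_nonneg (H : IsRWG P a h p α q S F) (i j : Fin 2) (k : Fin 5) :
    0 ≤ wt p α q i j k := by
  have h1 := mul_nonneg H.hα0.le H.hp0
  have h2 := mul_nonneg (sub_nonneg.2 H.hα1.le) H.hp0
  have hq := H.hq
  fin_cases k <;> simp [wt, hq] <;> split_ifs <;> first | assumption | exact le_rfl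

lemma IsRWG.sum_wt (H : IsRWG P a h p α q S F) (i j : Fin 2) : ∑ k, wt p α q i j k = 1 := by
  have h0 := H.hqsum0 i
  have h1 := H.hqsum1 i
  fin_cases j <;> simp [wt, Fin.sum_univ_five] <;> linarith

lemma IsRWG.transition_eq (H : IsRWG P a h p α q S F) {i j : Fin 2} {x : E}
    (hx : x ∈ V a h i j) (f : E → ℝ) :
    ∑ i : Fin 2,
        ((V a h i 0).indicator (fun _ => (1 : ℝ)) x *
          (α * p * f (x + vec 0 0 h) + (1 - α) * p * f (x + vec 0 0 (-h)) +
            ∑ k : Fin 3, q i 0 k * f (x + w a i k)) +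
        (V a h i 1).indicator (fun _ => (1 : ℝ)) x *
          ∑ k : Fin 3, q i 1 k * f (x + w a i k)) =
      ∑ k, wt p α q i j k * f (x + step a h i k) := by
  have hv (i' j' : Fin 2) : x ∈ V a h i' j' ↔ i = i' ∧ j = j' :=
    ⟨fun hx' => V_unique H.ha H.hh hx hx', by rintro ⟨rfl, rfl⟩; exact hx⟩
  fin_cases i <;> fin_cases j <;>
    simp [indicator, hv, Fin.sum_univ_five, Fin.sum_univ_three, wt, step] <;> ring

lemma IsRWG.integral_succ_eq (H : IsRWG P a h p α q S F) (n : ℕ) {f : E → ℝ}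
    (hf : Measurable f) (hb : ∃ C, ∀ x, |f x| ≤ C) :
    ∫ ω, f (S (n + 1) ω) ∂P = ∫ ω, (∑ i : Fin 2,
        ((V a h i 0).indicator (fun _ => (1 : ℝ)) (S n ω) *
          (α * p * f (S n ω + vec 0 0 h) + (1 - α) * p * f (S n ω + vec 0 0 (-h)) +
            ∑ k : Fin 3, q i 0 k * f (S n ω + w a i k)) +
        (V a h i 1).indicator (fun _ => (1 : ℝ)) (S n ω) *
          ∑ k : Fin 3, q i 1 k * f (S n ω + w a i k))) ∂P := by
  have := H.prob
  have hm : F n ≤ ‹MeasurableSpace Ω› := by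
    rw [H.hF n]
    exact Measurable.comap_le (measurable_pi_lambda _ fun k =>
      (H.hSmeas _).sub (H.hSmeas _))
  rw [← integral_condExp hm]
  exact integral_congr_ae (H.hTrans n f hf hb)

lemma IsRWG.ae_mem (H : IsRWG P a h p α q S F) (n : ℕ) :
    ∀ᵐ ω ∂P, S n ω ∈ lattice a h ∧ ‖S n ω‖ ≤ n * stepBound a h := by
  have := H.prob
  induction n with
  | zero =>
    refine Eventually.of_forall fun ω => ?_
    rw [H.hS0]
    refine ⟨⟨0, 0, mem_V_iff.2 ⟨0, 0, 0, ?_⟩⟩, ?_⟩ <;> simp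
  | succ n ih =>
    set A : Set E := {x | x ∈ lattice a h ∧ ‖x‖ ≤ ((n + 1 : ℕ) : ℝ) * stepBound a h} with hA
    have hAm : MeasurableSet A :=
      (measurableSet_lattice a h).inter (measurableSet_le measurable_norm measurable_const)
    have hfm : Measurable (Aᶜ.indicator fun _ => (1 : ℝ)) :=
      measurable_const.indicator hAm.compl
    have hb (x : E) : |Aᶜ.indicator (fun _ => (1 : ℝ)) x| ≤ 1 := by
      by_cases hx : x ∈ A <;> simp [indicator, hx]
    have key := H.integral_succ_eq n hfm ⟨1, hb⟩
    have hz : ∫ ω, Aᶜ.indicator (fun _ => (1 : ℝ)) (S (n + 1) ω) ∂P = 0 := by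
      rw [key]
      refine integral_eq_zero_of_ae ?_
      filter_upwards [ih] with ω hω
      obtain ⟨⟨i, j, hij⟩, hn⟩ := hω
      rw [H.transition_eq hij]
      refine Finset.sum_eq_zero fun k _ => ?_
      by_cases hk : wt p α q i j k = 0
      · simp [hk]
      · have : S n ω + step a h i k ∈ A := by
          refine ⟨⟨_, _, add_step_mem_V hij hk⟩, (norm_add_le _ _).trans ?_⟩
          push_cast
          linarith [norm_step_le a h i k]
        simp [this]
    have hinteg : Integrable (fun ω => Aᶜ.indicator (fun _ => (1 : ℝ)) (S (n + 1) ω)) P :=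
      Integrable.of_bound (hfm.comp (H.hSmeas _)).aestronglyMeasurable 1
        (Eventually.of_forall fun ω => hb _)
    rw [integral_eq_zero_iff_of_nonneg
      (fun ω => indicator_nonneg (fun _ _ => zero_le_one) _) hinteg] at hz
    filter_upwards [hz] with ω hω
    by_contra hc
    have : S (n + 1) ω ∈ Aᶜ := hc
    simp [this] at hω

/-- A function that is bounded on bounded sets is integrable along the walk. -/
lemma IsRWG.integrable_comp (H : IsRWG P a h p α q S F) (n : ℕ) {f : E → ℝ}
    (hf : Measurable f) (hb : ∀ R, ∃ C, ∀ x, ‖x‖ ≤ R → |f x| ≤ C) :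
    Integrable (fun ω => f (S n ω)) P := by
  have := H.prob
  obtain ⟨C, hC⟩ := hb (n * stepBound a h)
  refine Integrable.of_bound (hf.comp (H.hSmeas n)).aestronglyMeasurable C ?_
  filter_upwards [H.ae_mem n] with ω hω using hC _ hω.2

lemma IsRWG.integral_succ_le (H : IsRWG P a h p α q S F) (n : ℕ) {f g : E → ℝ}
    (hf : Measurable f) (hbf : ∀ R, ∃ C, ∀ x, ‖x‖ ≤ R → |f x| ≤ C)
    (hg : Measurable g) (hbg : ∀ R, ∃ C, ∀ x, ‖x‖ ≤ R → |g x| ≤ C)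
    (hfg : ∀ i j, ∀ x ∈ V a h i j, ∑ k, wt p α q i j k * f (x + step a h i k) ≤ g x) :
    ∫ ω, f (S (n + 1) ω) ∂P ≤ ∫ ω, g (S n ω) ∂P := by
  have := H.prob
  set A : Set E := {x | ‖x‖ ≤ ((n + 1 : ℕ) : ℝ) * stepBound a h} with hA
  have hAm : MeasurableSet A := measurableSet_le measurable_norm measurable_const
  have hb : ∃ C, ∀ x, |A.indicator f x| ≤ C := by
    obtain ⟨C, hC⟩ := hbf (((n + 1 : ℕ) : ℝ) * stepBound a h)
    refine ⟨max C 0, fun x => ?_⟩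
    by_cases hx : x ∈ A
    · simpa [hx] using Or.inl (hC x hx)
    · simp [hx]
  have e1 : ∫ ω, f (S (n + 1) ω) ∂P = ∫ ω, A.indicator f (S (n + 1) ω) ∂P := by
    refine integral_congr_ae ?_
    filter_upwards [H.ae_mem (n + 1)] with ω hω
    have : S (n + 1) ω ∈ A := hω.2
    simp [this]
  have e2 := H.integral_succ_eq n (hf.indicator hAm) hb
  have e3 : (fun ω => ∑ i : Fin 2,
        ((V a h i 0).indicator (fun _ => (1 : ℝ)) (S n ω) *
          (α * p * A.indicator f (S n ω + vec 0 0 h) +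
            (1 - α) * p * A.indicator f (S n ω + vec 0 0 (-h)) +
            ∑ k : Fin 3, q i 0 k * A.indicator f (S n ω + w a i k)) +
        (V a h i 1).indicator (fun _ => (1 : ℝ)) (S n ω) *
          ∑ k : Fin 3, q i 1 k * A.indicator f (S n ω + w a i k))) ≤ᵐ[P]
      fun ω => g (S n ω) := by
    filter_upwards [H.ae_mem n] with ω hω
    obtain ⟨⟨i, j, hij⟩, hn⟩ := hω
    rw [H.transition_eq hij]
    refine (Finset.sum_congr rfl fun k _ => ?_).trans_le (hfg i j _ hij)
    have : S n ω + step a h i k ∈ A := by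
      refine (norm_add_le _ _).trans ?_
      push_cast
      linarith [norm_step_le a h i k]
    simp [this]
  rw [e1, e2]
  exact integral_mono_ae (integrable_condExp.congr (H.hTrans n _ (hf.indicator hAm) hb))
    (H.integrable_comp n hg hbg) e3

lemma IsRWG.sum_wt_mul_le (H : IsRWG P a h p α q S F) (i j : Fin 2) {φ δ : Fin 5 → ℝ}
    {b C : ℝ} (hδ : ∑ k, wt p α q i j k * δ k = 0) (hφ : ∀ k, φ k ≤ C + b * δ k) :
    ∑ k, wt p α q i j k * φ k ≤ C :=
  calc ∑ k, wt p α q i j k * φ k ≤ ∑ k, wt p α q i j k * (C + b * δ k) :=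
        Finset.sum_le_sum fun k _ => mul_le_mul_of_nonneg_left (hφ k) (H.wt_nonneg i j k)
    _ = C * ∑ k, wt p α q i j k + b * ∑ k, wt p α q i j k * δ k := by
        simp only [Finset.mul_sum, ← Finset.sum_add_distrib]
        exact Finset.sum_congr rfl fun k _ => by ring
    _ = C := by rw [hδ, H.sum_wt]; ring

/-- If `G` has constant drift `c` along the walk and bounded jumps, the fourth moment of
`G (S n) - n c` grows at most quadratically. -/
lemma IsRWG.integral_pow_four_le (H : IsRWG P a h p α q S F) {G : E → ℝ} {c D : ℝ}
    (hG : Measurable G) (hbG : ∀ R, ∃ C, ∀ x, ‖x‖ ≤ R → |G x| ≤ C) (hG0 : G 0 = 0)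
    (hdrift : ∀ i j, ∀ x ∈ V a h i j,
      ∑ k, wt p α q i j k * (G (x + step a h i k) - G x - c) = 0)
    (hD : ∀ i k x, |G (x + step a h i k) - G x - c| ≤ D) (n : ℕ) :
    Integrable (fun ω => (G (S n ω) - n * c) ^ 4) P ∧
      ∫ ω, (G (S n ω) - n * c) ^ 4 ∂P ≤ 11 * D ^ 4 * (n : ℝ) ^ 2 := by
  have := H.prob
  have hmeas (m n : ℕ) : Measurable fun x => (G x - n * c) ^ m := (hG.sub_const _).pow_const m
  have hbdd (m n : ℕ) (R : ℝ) : ∃ C, ∀ x, ‖x‖ ≤ R → |(G x - n * c) ^ m| ≤ C := by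
    obtain ⟨C, hC⟩ := hbG R
    refine ⟨(C + |n * c|) ^ m, fun x hx => ?_⟩
    rw [abs_pow]
    exact pow_le_pow_left₀ (abs_nonneg _) ((abs_sub _ _).trans (by linarith [hC x hx])) m
  have hinteg (m n : ℕ) : Integrable (fun ω => (G (S n ω) - n * c) ^ m) P :=
    H.integrable_comp n (hmeas m n) (hbdd m n)
  have hsq (i : Fin 2) (k : Fin 5) (x : E) : (G (x + step a h i k) - G x - c) ^ 2 ≤ D ^ 2 :=
    sq_le_sq' (abs_le.1 (hD i k x)).1 (abs_le.1 (hD i k x)).2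
  have second (n : ℕ) : ∫ ω, (G (S n ω) - n * c) ^ 2 ∂P ≤ n * D ^ 2 := by
    induction n with
    | zero => simp [H.hS0, hG0]
    | succ n ih =>
      have hstep : ∫ ω, (G (S (n + 1) ω) - (n + 1 : ℕ) * c) ^ 2 ∂P ≤
          ∫ ω, ((G (S n ω) - n * c) ^ 2 + D ^ 2) ∂P := by
        refine H.integral_succ_le n (f := fun x => (G x - (n + 1 : ℕ) * c) ^ 2)
          (g := fun x => (G x - n * c) ^ 2 + D ^ 2) (hmeas 2 _) (hbdd 2 _)
          ((hmeas 2 n).add_const _) (fun R => ?_) fun i j x hx => ?_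
        · obtain ⟨C, hC⟩ := hbdd 2 n R
          exact ⟨C + |D ^ 2|, fun x hx => (abs_add_le _ _).trans (by linarith [hC x hx])⟩
        · refine H.sum_wt_mul_le i j (b := 2 * (G x - n * c)) (hdrift i j x hx) fun k => ?_
          push_cast
          nlinarith [hsq i k x]
      rw [integral_add (hinteg 2 n) (integrable_const _)] at hstep
      simp at hstep ⊢
      linarith
  refine ⟨hinteg 4 n, ?_⟩
  induction n with
  | zero => simp [H.hS0, hG0]
  | succ n ih =>
    have hstep : ∫ ω, (G (S (n + 1) ω) - (n + 1 : ℕ) * c) ^ 4 ∂P ≤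
        ∫ ω, ((G (S n ω) - n * c) ^ 4 + (8 * D ^ 2 * (G (S n ω) - n * c) ^ 2 + 3 * D ^ 4)) ∂P := by
      refine H.integral_succ_le n (f := fun x => (G x - (n + 1 : ℕ) * c) ^ 4)
        (g := fun x => (G x - n * c) ^ 4 + (8 * D ^ 2 * (G x - n * c) ^ 2 + 3 * D ^ 4))
        (hmeas 4 _) (hbdd 4 _)
        ((hmeas 4 n).add (((hmeas 2 n).const_mul _).add_const _)) (fun R => ?_)
        fun i j x hx => ?_
      · obtain ⟨C, hC⟩ := hbdd 4 n R
        obtain ⟨C', hC'⟩ := hbdd 2 n R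
        refine ⟨C + (8 * D ^ 2 * C' + 3 * D ^ 4), fun x hx => ?_⟩
        have h4 := hC x hx
        have h2 := hC' x hx
        rw [abs_of_nonneg (by positivity)] at h4 h2 ⊢
        gcongr
      · refine H.sum_wt_mul_le i j (b := 4 * (G x - n * c) ^ 3) (hdrift i j x hx) fun k => ?_
        have hs := hsq i k x
        set δ := G (x + step a h i k) - G x - c with hδ
        set y := G x - n * c with hy
        have e : G (x + step a h i k) - (n + 1 : ℕ) * c = y + δ := by
          push_cast
          ring
        rw [e]
        have hδ4 : δ ^ 4 ≤ D ^ 4 := by nlinarith [sq_nonneg δ, sq_nonneg D]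
        have hy2 : y ^ 2 * δ ^ 2 ≤ y ^ 2 * D ^ 2 := mul_le_mul_of_nonneg_left hs (sq_nonneg y)
        nlinarith [mul_nonneg (sq_nonneg δ) (sq_nonneg (y - δ))]
    have hlow : Integrable (fun ω => 8 * D ^ 2 * (G (S n ω) - n * c) ^ 2 + 3 * D ^ 4) P :=
      ((hinteg 2 n).const_mul _).add (integrable_const _)
    rw [integral_add (hinteg 4 n) hlow,
      integral_add ((hinteg 2 n).const_mul _) (integrable_const _), integral_const_mul] at hstep
    simp only [integral_const, probReal_univ, smul_eq_mul, one_mul] at hstep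
    have h2 := mul_le_mul_of_nonneg_left (second n) (show 0 ≤ 8 * D ^ 2 by positivity)
    have hn : 0 ≤ (n : ℝ) * D ^ 4 := by positivity
    push_cast at hstep ⊢
    nlinarith

end Walk

/-- A sequence of random variables whose fourth moments grow at most quadratically is
almost surely `o(n)`. -/
lemma ae_tendsto_inv_mul_of_integral_pow_four_le {Ω : Type} [MeasurableSpace Ω] {P : Measure Ω}
    {X : ℕ → Ω → ℝ} {C : ℝ} (hinteg : ∀ n, Integrable (fun ω => X n ω ^ 4) P)
    (hX : ∀ n : ℕ, ∫ ω, X n ω ^ 4 ∂P ≤ C * (n : ℝ) ^ 2) :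
    ∀ᵐ ω ∂P, Tendsto (fun n : ℕ => (n : ℝ)⁻¹ * X n ω) atTop (nhds 0) := by
  have hpow (n : ℕ) (ω : Ω) : ((n : ℝ)⁻¹ * X n ω) ^ 4 = (n : ℝ)⁻¹ ^ 4 * X n ω ^ 4 := mul_pow _ _ _
  have hinteg' (n : ℕ) : Integrable (fun ω => ((n : ℝ)⁻¹ * X n ω) ^ 4) P := by
    simp only [hpow]
    exact (hinteg n).const_mul _
  have hsum : Summable fun n : ℕ => ∫ ω, ‖((n : ℝ)⁻¹ * X n ω) ^ 4‖ ∂P := by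
    refine Summable.of_nonneg_of_le (fun n => integral_nonneg fun ω => norm_nonneg _) (fun n => ?_)
      ((Real.summable_nat_pow_inv.2 one_lt_two).mul_left C)
    have (ω : Ω) : ‖((n : ℝ)⁻¹ * X n ω) ^ 4‖ = (n : ℝ)⁻¹ ^ 4 * X n ω ^ 4 := by
      rw [Real.norm_of_nonneg (by positivity), hpow]
    simp only [this, integral_const_mul]
    rcases eq_or_ne (n : ℝ) 0 with hn | hn
    · simp [hn]
    · calc (n : ℝ)⁻¹ ^ 4 * ∫ ω, X n ω ^ 4 ∂P ≤ (n : ℝ)⁻¹ ^ 4 * (C * (n : ℝ) ^ 2) := by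
            gcongr
            exact hX n
        _ = C * ((n : ℝ) ^ 2)⁻¹ := by field_simp
  have hlint : ∑' n : ℕ, ∫⁻ ω, ‖((n : ℝ)⁻¹ * X n ω) ^ 4‖ₑ ∂P ≠ ⊤ := by
    simp only [← ofReal_integral_norm_eq_lintegral_enorm (hinteg' _)]
    exact hsum.tsum_ofReal_ne_top
  rw [← lintegral_tsum fun n => (hinteg' n).1.enorm] at hlint
  have hae := ae_lt_top' (AEMeasurable.tsum fun n => (hinteg' n).1.enorm) hlint
  filter_upwards [hae] with ω hω
  have h0 := ENNReal.tendsto_atTop_zero_of_tsum_ne_top hω.ne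
  have h4 : Tendsto (fun n : ℕ => ((n : ℝ)⁻¹ * X n ω) ^ 4) atTop (nhds 0) := by
    rw [tendsto_zero_iff_enorm_tendsto_zero]
    simpa [Nat.cofinite_eq_atTop] using h0
  rw [tendsto_zero_iff_abs_tendsto_zero]
  have := h4.rpow_const (p := 1 / 4) (Or.inr (by norm_num))
  rw [Real.zero_rpow (by norm_num)] at this
  refine this.congr fun n => ?_
  rw [← Even.pow_abs (by decide), ← Real.rpow_natCast, ← Real.rpow_mul (abs_nonneg _)]
  norm_num

section Corrector

variable {Ω : Type} [MeasurableSpace Ω] {P : Measure Ω} {a h p α : ℝ}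
  {q : Fin 2 → Fin 2 → Fin 3 → ℝ} {S : ℕ → Ω → E} {F : ℕ → MeasurableSpace Ω}

/-- The mean jump from a vertex of `V i j`, in coordinate `r`. -/
def drift (a h p α : ℝ) (q : Fin 2 → Fin 2 → Fin 3 → ℝ) (r : Fin 3) (i j : Fin 2) : ℝ :=
  ∑ k, wt p α q i j k * step a h i k r

/-- The limiting velocity is the stationary average of the drift. -/
lemma IsRWG.velocity_eq (H : IsRWG P a h p α q S F) (r : Fin 3) :
    2 * (2 - p) * (muG a h p α q + (p / (2 - p)) • mG a h p α q) r =
      drift a h p α q r 0 0 + drift a h p α q r 1 0 +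
        (1 - p) * (drift a h p α q r 0 1 + drift a h p α q r 1 1) := by
  have hp2 : 2 - p ≠ 0 := by linarith [H.hp1]
  have h00 := eq_sub_of_add_eq (eq_sub_of_add_eq (H.hqsum0 0))
  have h10 := eq_sub_of_add_eq (eq_sub_of_add_eq (H.hqsum0 1))
  have h01 := eq_sub_of_add_eq (eq_sub_of_add_eq (H.hqsum1 0))
  have h11 := eq_sub_of_add_eq (eq_sub_of_add_eq (H.hqsum1 1))
  fin_cases r <;>
    simp [drift, wt, step, Fin.sum_univ_five, w_eq, muG, mG, uu, vv, h00, h10, h01, h11] <;>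
    field_simp <;> ring

/-- Solution of the Poisson equation for the type of the current vertex. -/
lemma IsRWG.exists_corrector (H : IsRWG P a h p α q S F) (hp : 0 < p) (r : Fin 3) :
    ∃ g : Fin 2 → Fin 2 → ℝ, ∀ i j,
      ∑ k, wt p α q i j k * (step a h i k r + (g (1 - i) (target j k) - g i j) -
        (muG a h p α q + (p / (2 - p)) • mG a h p α q) r) = 0 := by
  have hv := H.velocity_eq r
  set c := (muG a h p α q + (p / (2 - p)) • mG a h p α q) r
  set d := drift a h p α q r with hd
  set e := (d 0 0 - c + (1 - p) * (d 1 1 - c)) / p with he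
  have hep : p * e = d 0 0 - c + (1 - p) * (d 1 1 - c) := by
    rw [he]
    field_simp
  refine ⟨![![e, d 0 1 - c], ![0, d 1 1 - c + e]], fun i j => ?_⟩
  have hsplit (g : Fin 5 → ℝ) :
      ∑ k, wt p α q i j k * (step a h i k r + g k - c) =
        d i j - c + ∑ k, wt p α q i j k * g k := by
    have hs := H.sum_wt i j
    calc _ = ∑ k, wt p α q i j k * step a h i k r - c * ∑ k, wt p α q i j k +
          ∑ k, wt p α q i j k * g k := by
            simp only [Finset.mul_sum, ← Finset.sum_add_distrib, ← Finset.sum_sub_distrib]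
            exact Finset.sum_congr rfl fun k _ => by ring
      _ = _ := by rw [hs, mul_one]; rfl
  rw [hsplit]
  have h00 := eq_sub_of_add_eq (eq_sub_of_add_eq (H.hqsum0 i))
  have h01 := eq_sub_of_add_eq (eq_sub_of_add_eq (H.hqsum1 i))
  fin_cases i <;> fin_cases j <;>
    simp [wt, target, Fin.sum_univ_five] at h00 h01 ⊢ <;> simp only [h00, h01] <;> nlinarith

lemma IsRWG.ae_tendsto_coord (H : IsRWG P a h p α q S F) (hp : 0 < p) (r : Fin 3) :
    ∀ᵐ ω ∂P, Tendsto (fun n : ℕ => (n : ℝ)⁻¹ * S n ω r) atTop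
      (nhds ((muG a h p α q + (p / (2 - p)) • mG a h p α q) r)) := by
  obtain ⟨g, hg⟩ := H.exists_corrector hp r
  set c := (muG a h p α q + (p / (2 - p)) • mG a h p α q) r
  set φ : E → ℝ := fun x => ∑ i, ∑ j, (V a h i j).indicator (fun _ => g i j) x with hφ
  have hφm : Measurable φ := Finset.measurable_sum _ fun i _ => Finset.measurable_sum _ fun j _ =>
    measurable_const.indicator (measurableSet_V a h i j)
  set B := ∑ i, ∑ j, |g i j| with hB
  have hφB (x : E) : |φ x| ≤ B := by
    refine (Finset.abs_sum_le_sum_abs _ _).trans (Finset.sum_le_sum fun i _ =>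
      (Finset.abs_sum_le_sum_abs _ _).trans (Finset.sum_le_sum fun j _ => ?_))
    by_cases hx : x ∈ V a h i j <;> simp [hx]
  have hφV {i j : Fin 2} {x : E} (hx : x ∈ V a h i j) : φ x = g i j := by
    rw [hφ]
    have hz (i' j' : Fin 2) (hne : ¬ (i = i' ∧ j = j')) :
        (V a h i' j').indicator (fun _ => g i' j') x = 0 :=
      indicator_of_notMem (fun hx' => hne (V_unique H.ha H.hh hx hx')) _
    refine (Finset.sum_eq_single i (fun i' _ hi => ?_) (by simp)).trans
      ((Finset.sum_eq_single j (fun j' _ hj => ?_) (by simp)).trans (indicator_of_mem hx _))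
    · exact Finset.sum_eq_zero fun j' _ => hz i' j' fun hc => hi hc.1.symm
    · exact hz i j' fun hc => hj hc.2.symm
  have hcoord (x : E) : |x r| ≤ ‖x‖ := PiLp.norm_apply_le x r
  have hmom := H.integral_pow_four_le (G := fun x => x r + (φ x - φ 0)) (c := c)
    (D := stepBound a h + 2 * B + |c|) (by fun_prop)
    (fun R => ⟨R + 2 * B, fun x hx => ?_⟩) (by simp) (fun i j x hx => ?_) (fun i k x => ?_)
  · have hlim := ae_tendsto_inv_mul_of_integral_pow_four_le (fun n => (hmom n).1)
      (fun n => (hmom n).2)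
    filter_upwards [hlim] with ω hω
    have hφ0 : Tendsto (fun n : ℕ => (n : ℝ)⁻¹ * (φ (S n ω) - φ 0)) atTop (nhds 0) := by
      refine squeeze_zero_norm (a := fun n : ℕ => (n : ℝ)⁻¹ * (2 * B)) (fun n => ?_) ?_
      · rw [norm_mul, Real.norm_of_nonneg (by positivity), Real.norm_eq_abs]
        gcongr
        exact (abs_sub _ _).trans (by linarith [hφB (S n ω), hφB 0])
      · simpa using (tendsto_inv_atTop_nhds_zero_nat (𝕜 := ℝ)).mul_const (2 * B)
    have := (hω.sub hφ0).add_const c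
    simp only [sub_zero, zero_add] at this
    refine this.congr' ?_
    filter_upwards [eventually_ne_atTop 0] with n hn
    field_simp
    ring
  · have h1 := hcoord x
    have h2 := abs_sub (φ x) (φ 0)
    have h3 := abs_add_le (x r) (φ x - φ 0)
    linarith [hφB x, hφB 0]
  · refine Eq.trans (Finset.sum_congr rfl fun k _ => ?_) (hg i j)
    by_cases hk : wt p α q i j k = 0
    · simp [hk]
    · rw [hφV hx, hφV (add_step_mem_V hx hk), PiLp.add_apply]
      ring
  · have h1 := (hcoord (step a h i k)).trans (norm_step_le a h i k)
    have h2 := abs_sub (φ (x + step a h i k)) (φ x)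
    have e : (x + step a h i k) r + (φ (x + step a h i k) - φ 0) - (x r + (φ x - φ 0)) - c =
        step a h i k r + (φ (x + step a h i k) - φ x) - c := by
      rw [PiLp.add_apply]
      ring
    rw [e]
    have h3 := abs_sub (step a h i k r + (φ (x + step a h i k) - φ x)) c
    have h4 := abs_add_le (step a h i k r) (φ (x + step a h i k) - φ x)
    linarith [hφB x, hφB (x + step a h i k)]

end Corrector

end RWG

theorem rwg_slln {Ω : Type} [MeasurableSpace Ω] (P : Measure Ω)
    (a h p α : ℝ) (q : Fin 2 → Fin 2 → Fin 3 → ℝ)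
    (S : ℕ → Ω → RWG.E) (F : ℕ → MeasurableSpace Ω)
    (hRW : RWG.IsRWG P a h p α q S F) (hp : 0 < p) :
    ∀ᵐ ω ∂P, Tendsto (fun n : ℕ => (n : ℝ)⁻¹ • S n ω) atTop
      (nhds (RWG.muG a h p α q + (p / (2 - p)) • RWG.mG a h p α q)) := by
  filter_upwards [ae_all_iff.2 (hRW.ae_tendsto_coord hp)] with ω hω
  exact ((PiLp.continuous_toLp 2 fun _ : Fin 3 => ℝ).tendsto _).comp (tendsto_pi_nhds.2 hω)
end
end
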